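/- The derivations Y₀' := X₀, Y₁' := X_{E 1}, Y₂' := X_{E (−2)} satisfy the relations ⁅Y₀', Y₁'⁆ = Y₁', ⁅Y₀', Y₂'⁆ = −2 • Y₂', ⁅Y₁',⁅Y₁',⁅Y₁',⁅Y₁',⁅Y₁', Y₂'⁆⁆⁆⁆⁆ = 0 and ⁅Y₂',⁅Y₂', Y₁'⁆⁆ = 0 (the Serre relations of the Kac–Moody algebra A₂⁽²⁾). -/

import Mathlib

/-!
Write `X_a` for `X_{E a}`. A derivation of `QP` is determined by its values on the `E q` and the
`uₙ` (`QP.derivation_ext`). Evaluating on these generators gives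

* `⁅X₀, X_a⁆ = a • X_a`, because `X₀` commutes with `D`;
* `⁅D, X_a⁆ = -(E a • X₀)`.

Moreover a derivation that kills every `E q` and commutes with `D` is zero
(`eq_zero_of_lie_D_eq_zero`): applying it to `D (E 1) = u₁ * E 1` shows that it kills `u₁`, hence
every `uₙ = Dⁿ⁻¹ u₁`. So each Serre relation follows once the commutator of its left-hand side with
`D` is shown to vanish (`lie_D_serre₁`, `lie_D_serre₂`).

If `W` kills the `E q` and has weight `c` under `ad X₀`, the Jacobi identity gives
`⁅D, ⁅X_a, W⁆⁆ = ⁅X_a, ⁅D, W⁆⁆ - c • E a • W` (`lie_D_step`). For `W_k = (ad X₁)^k X_{-2}`, of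
weight `k - 2`, this yields
`⁅D, W₁⁆ = 2 E 1 • X_{-2} + E (-2) • X₁`, `⁅D, W₂⁆ = 3 E 1 • W₁`, `⁅D, W₃⁆ = 3 E 1 • W₂`,
`⁅D, W₄⁆ = 2 E 1 • W₃`, `⁅D, W₅⁆ = 0`. The relation of degree two in `X_{-2}` is similar.
-/

set_option synthInstance.maxHeartbeats 1000000
set_option maxHeartbeats 1000000

noncomputable section

/-- The algebra of "quasipolynomials": the group algebra of `ℤ` (group element `q`
modelling `e^{q·u}`) with coefficients in polynomials in countably many variables
(variable of index `n-1` modelling the `n`-th `x`-derivative of `u`). -/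
abbrev QP : Type := AddMonoidAlgebra (MvPolynomial ℕ ℂ) ℤ

/-- `E q` models `e^{q·u}`. -/
def E (q : ℤ) : QP := AddMonoidAlgebra.single q 1

/-- `uvar n` models the `n`-th derivative `∂ⁿu/∂xⁿ` (for `n ≥ 1`); it is the
polynomial generator of index `n - 1`. -/
def uvar (n : ℕ) : QP := AddMonoidAlgebra.single 0 (MvPolynomial.X (n - 1))

/-- `D` is the total `x`-derivative: the unique `ℂ`-derivation of `QP` with
`D uₙ = u_{n+1}` for `n ≥ 1` and `D (E q) = q • (u₁ * E q)`. -/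
def IsD (D : Derivation ℂ QP QP) : Prop :=
  (∀ n : ℕ, 1 ≤ n → D (uvar n) = uvar (n + 1)) ∧
  (∀ q : ℤ, D (E q) = q • (uvar 1 * E q))

/-- `X₀` models `∂/∂u`: the unique `ℂ`-derivation with `X₀ uₙ = 0` and `X₀ (E q) = q • E q`. -/
def IsX0 (X : Derivation ℂ QP QP) : Prop :=
  (∀ n : ℕ, 1 ≤ n → X (uvar n) = 0) ∧ (∀ q : ℤ, X (E q) = q • E q)

/-- `X_f` is the unique `ℂ`-derivation with `X_f (E q) = 0` for all `q` and
`X_f uₙ = D^[n-1] f` for all `n ≥ 1`. -/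
def IsXf (D : Derivation ℂ QP QP) (f : QP) (Xf : Derivation ℂ QP QP) : Prop :=
  (∀ q : ℤ, Xf (E q) = 0) ∧ (∀ n : ℕ, 1 ≤ n → Xf (uvar n) = (⇑D)^[n - 1] f)

/-- The algebra `QP` is generated by the `E q` and the `uₙ`. -/
theorem QP.derivation_ext {X Y : Derivation ℂ QP QP} (hE : ∀ q, X (E q) = Y (E q))
    (hu : ∀ n, 1 ≤ n → X (uvar n) = Y (uvar n)) : X = Y := by
  have h0 : ∀ p : MvPolynomial ℕ ℂ,
      X (AddMonoidAlgebra.single 0 p) = Y (AddMonoidAlgebra.single 0 p) := by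
    intro p
    induction p using MvPolynomial.induction_on with
    | C a =>
      have h : (AddMonoidAlgebra.single 0 (MvPolynomial.C a) : QP) = algebraMap ℂ QP a := by
        simp [AddMonoidAlgebra.coe_algebraMap, MvPolynomial.algebraMap_eq]
      rw [h, Derivation.map_algebraMap, Derivation.map_algebraMap]
    | add p q hp hq =>
      rw [AddMonoidAlgebra.single_add, map_add, map_add, hp, hq]
    | mul_X p n hp =>
      have h : (AddMonoidAlgebra.single 0 (p * MvPolynomial.X n) : QP)
          = AddMonoidAlgebra.single 0 p * uvar (n + 1) := by
        simp [uvar]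
      rw [h, Derivation.leibniz, Derivation.leibniz, hp, hu _ (Nat.le_add_left 1 n)]
  ext1 f
  induction f using AddMonoidAlgebra.induction_linear with
  | zero => rw [map_zero, map_zero]
  | add f g hf hg => rw [map_add, map_add, hf, hg]
  | single q p =>
    have h : (AddMonoidAlgebra.single q p : QP) = AddMonoidAlgebra.single 0 p * E q := by
      simp [E]
    rw [h, Derivation.leibniz, Derivation.leibniz, h0, hE]

theorem E_mul_E_neg (q : ℤ) : E q * E (-q) = 1 := by
  rw [E, E, AddMonoidAlgebra.single_mul_single, add_neg_cancel, one_mul]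
  rfl

theorem lie_apply_E_eq_zero {Y Z : Derivation ℂ QP QP} (hY : ∀ q, Y (E q) = 0)
    (hZ : ∀ q, Z (E q) = 0) (q : ℤ) : ⁅Y, Z⁆ (E q) = 0 := by
  rw [Derivation.commutator_apply, hY, hZ, map_zero, map_zero, sub_zero]

theorem eq_zero_of_lie_D_eq_zero {D Z : Derivation ℂ QP QP} (hD : IsD D)
    (hZ : ∀ q, Z (E q) = 0) (h : ⁅D, Z⁆ = 0) : Z = 0 := by
  have hc : ∀ f, Z (D f) = D (Z f) := fun f => by
    have := congrArg (fun T : Derivation ℂ QP QP => T f) h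
    rw [Derivation.commutator_apply, Derivation.zero_apply] at this
    exact (sub_eq_zero.mp this).symm
  have h1 : Z (uvar 1) = 0 := by
    have h2 := hc (E 1)
    rw [hD.2, hZ, map_zero, one_smul, Derivation.leibniz, hZ, smul_zero, zero_add,
      smul_eq_mul] at h2
    -- `E 1` is a unit
    calc Z (uvar 1) = (E 1 * Z (uvar 1)) * E (-1) := by
          rw [mul_right_comm, E_mul_E_neg, one_mul]
      _ = 0 := by rw [h2, zero_mul]
  refine QP.derivation_ext (fun q => by rw [hZ, Derivation.zero_apply]) fun n hn => ?_
  rw [Derivation.zero_apply]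
  induction n, hn using Nat.le_induction with
  | base => exact h1
  | succ n hn ih => rw [← hD.1 n hn, hc, ih, map_zero]

theorem lie_D_Xf {D X0 Y : Derivation ℂ QP QP} (hD : IsD D) (hX0 : IsX0 X0) {f : QP}
    (hY : IsXf D f Y) : ⁅D, Y⁆ = -(f • X0) := by
  refine QP.derivation_ext (fun q => ?_) fun n hn => ?_
  · rw [Derivation.commutator_apply, hY.1, hD.2, map_zero, map_zsmul, Derivation.leibniz, hY.1,
      hY.2 1 le_rfl, Derivation.neg_apply, Derivation.smul_apply, hX0.2]
    simp only [zero_sub, zsmul_eq_mul, smul_eq_mul, Nat.sub_self, Function.iterate_zero_apply]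
    ring
  · rw [Derivation.commutator_apply, hY.2 n hn, hD.1 n hn, hY.2 _ (Nat.le_add_left 1 n),
      Derivation.neg_apply, Derivation.smul_apply, hX0.1 n hn, smul_zero, neg_zero,
      ← Function.iterate_succ_apply' (⇑D), sub_eq_zero]
    congr 2
    omega

theorem lie_X0_D {D X0 : Derivation ℂ QP QP} (hD : IsD D) (hX0 : IsX0 X0) : ⁅X0, D⁆ = 0 := by
  refine QP.derivation_ext (fun q => ?_) fun n hn => ?_
  · rw [Derivation.commutator_apply, hD.2, hX0.2, map_zsmul, map_zsmul, Derivation.leibniz,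
      hX0.1 1 le_rfl, hX0.2, hD.2, Derivation.zero_apply]
    simp only [zsmul_eq_mul, smul_eq_mul]
    ring
  · rw [Derivation.commutator_apply, hD.1 n hn, hX0.1 n hn, hX0.1 _ (Nat.le_add_left 1 n)]
    simp

theorem lie_X0_Xf {D X0 Y : Derivation ℂ QP QP} (hD : IsD D) (hX0 : IsX0 X0) {a : ℤ}
    (hY : IsXf D (E a) Y) : ⁅X0, Y⁆ = a • Y := by
  have hc : ∀ f, X0 (D f) = D (X0 f) := fun f => by
    have := congrArg (fun T : Derivation ℂ QP QP => T f) (lie_X0_D hD hX0)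
    rw [Derivation.commutator_apply, Derivation.zero_apply] at this
    exact sub_eq_zero.mp this
  have hit : ∀ k : ℕ, X0 ((⇑D)^[k] (E a)) = a • (⇑D)^[k] (E a) := fun k => by
    induction k with
    | zero => exact hX0.2 a
    | succ k ih => rw [Function.iterate_succ_apply', hc, ih, map_zsmul]
  refine QP.derivation_ext (fun q => ?_) fun n hn => ?_
  · rw [Derivation.commutator_apply, hX0.2, map_zsmul, Derivation.smul_apply, hY.1]
    simp
  · rw [Derivation.commutator_apply, hY.2 n hn, hX0.1 n hn, map_zero, sub_zero, hit,
      Derivation.smul_apply, hY.2 n hn]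

section Abstract

variable {R A : Type*} [CommRing R] [CommRing A] [Algebra R A]

theorem lie_smul_derivation (Y Z : Derivation R A A) (f : A) :
    ⁅Y, f • Z⁆ = f • ⁅Y, Z⁆ + Y f • Z := by
  ext g
  simp only [Derivation.commutator_apply, Derivation.smul_apply, Derivation.add_apply,
    smul_eq_mul, Derivation.leibniz]
  ring

theorem lie_X0_step {X0 Y W : Derivation R A A} {a c : ℤ} (hY : ⁅X0, Y⁆ = a • Y)
    (hW : ⁅X0, W⁆ = c • W) : ⁅X0, ⁅Y, W⁆⁆ = (a + c) • ⁅Y, W⁆ := by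
  rw [leibniz_lie, hY, hW, zsmul_lie, lie_zsmul, add_smul]

/-- In the application `f = E a` and `Y = X_a`; the hypothesis `W f = 0` removes the multiple of
`X0` from the bracket `⁅f • X0, W⁆`. -/
theorem lie_D_step {D X0 Y W : Derivation R A A} {f : A} {c : ℤ}
    (hY : ⁅D, Y⁆ = -(f • X0)) (hW : ⁅X0, W⁆ = c • W) (hWf : W f = 0) :
    ⁅D, ⁅Y, W⁆⁆ = ⁅Y, ⁅D, W⁆⁆ - c • f • W := by
  have h : ⁅W, X0⁆ = -(c • W) := by rw [← lie_skew, hW]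
  rw [leibniz_lie, hY, neg_lie, ← lie_skew (f • X0), lie_smul_derivation, hWf, h, zero_smul,
    add_zero, smul_neg, neg_neg, smul_comm f c W]
  abel

theorem lie_apply_eq_zero {Y Z : Derivation R A A} {f : A} (hY : Y f = 0) (hZ : Z f = 0) :
    ⁅Y, Z⁆ f = 0 := by
  rw [Derivation.commutator_apply, hY, hZ, map_zero, map_zero, sub_zero]

/-- The part of the relation of degree five in `Y1` that is formal in the weights and the
commutators with `D`; `e` and `f` play the roles of `E 1` and `E (-2)`. -/
theorem lie_D_serre₁ {D Y0 Y1 Y2 : Derivation R A A} {e f : A}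
    (hw1 : ⁅Y0, Y1⁆ = (1 : ℤ) • Y1) (hw2 : ⁅Y0, Y2⁆ = (-2 : ℤ) • Y2)
    (hd1 : ⁅D, Y1⁆ = -(e • Y0)) (hd2 : ⁅D, Y2⁆ = -(f • Y0))
    (h1e : Y1 e = 0) (h1f : Y1 f = 0) (h2e : Y2 e = 0) :
    ⁅D, ⁅Y1, ⁅Y1, ⁅Y1, ⁅Y1, ⁅Y1, Y2⁆⁆⁆⁆⁆⁆ = 0 := by
  have h10 : ⁅Y1, Y0⁆ = -Y1 := by rw [← lie_skew, hw1, one_smul]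
  have k1 := lie_apply_eq_zero h1e h2e
  have k2 := lie_apply_eq_zero h1e k1
  have k3 := lie_apply_eq_zero h1e k2
  have k4 := lie_apply_eq_zero h1e k3
  have w1 := lie_X0_step hw1 hw2
  have w2 := lie_X0_step hw1 w1
  have w3 := lie_X0_step hw1 w2
  have w4 := lie_X0_step hw1 w3
  have d1 := lie_D_step hd1 hw2 h2e
  have d2 := lie_D_step hd1 w1 k1
  have d3 := lie_D_step hd1 w2 k2
  have d4 := lie_D_step hd1 w3 k3
  have d5 := lie_D_step hd1 w4 k4
  generalize hW1 : ⁅Y1, Y2⁆ = W1 at *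
  generalize hW2 : ⁅Y1, W1⁆ = W2 at *
  generalize hW3 : ⁅Y1, W2⁆ = W3 at *
  generalize hW4 : ⁅Y1, W3⁆ = W4 at *
  have e1 : ⁅D, W1⁆ = e • (2 : ℤ) • Y2 + f • Y1 := by
    rw [d1, hd2, lie_neg, lie_smul_derivation, h1f, h10]
    module
  have e2 : ⁅D, W2⁆ = e • (3 : ℤ) • W1 := by
    rw [d2, e1, lie_add, lie_smul_derivation, lie_smul_derivation, h1e, h1f, lie_zsmul,
      hW1, lie_self]
    module
  have e3 : ⁅D, W3⁆ = e • (3 : ℤ) • W2 := by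
    rw [d3, e2, lie_smul_derivation, h1e, lie_zsmul, hW2]
    module
  have e4 : ⁅D, W4⁆ = e • (2 : ℤ) • W3 := by
    rw [d4, e3, lie_smul_derivation, h1e, lie_zsmul, hW3]
    module
  rw [d5, e4, lie_smul_derivation, h1e, lie_zsmul, hW4]
  module

/-- The counterpart of `lie_D_serre₁` for the relation of degree two in `Y2`. -/
theorem lie_D_serre₂ {D Y0 Y1 Y2 : Derivation R A A} {e f : A}
    (hw1 : ⁅Y0, Y1⁆ = (1 : ℤ) • Y1) (hw2 : ⁅Y0, Y2⁆ = (-2 : ℤ) • Y2)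
    (hd1 : ⁅D, Y1⁆ = -(e • Y0)) (hd2 : ⁅D, Y2⁆ = -(f • Y0))
    (h1f : Y1 f = 0) (h2e : Y2 e = 0) (h2f : Y2 f = 0) :
    ⁅D, ⁅Y2, ⁅Y2, Y1⁆⁆⁆ = 0 := by
  have h20 : ⁅Y2, Y0⁆ = (2 : ℤ) • Y2 := by rw [← lie_skew, hw2, neg_smul, neg_neg]
  have d1 := lie_D_step hd2 hw1 h1f
  have d2 := lie_D_step hd2 (lie_X0_step hw2 hw1) (lie_apply_eq_zero h2f h1f)
  rw [d2, d1, hd1, lie_sub, lie_neg, lie_smul_derivation, lie_zsmul, lie_smul_derivation,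
    h2e, h2f, h20, zero_smul, add_zero, lie_neg, lie_smul_derivation, lie_zsmul, lie_self, h2e]
  module

end Abstract

/-- The generators `Y₀' = X₀`, `Y₁' = X_{E 1}`, `Y₂' = X_{E (-2)}` of the
characteristic Lie algebra of the Tzitzeica equation satisfy the Serre relations
of the Kac–Moody algebra `A₂⁽²⁾`. -/
theorem stmt_11 (D Y0 Y1 Y2 : Derivation ℂ QP QP) (hD : IsD D) (hY0 : IsX0 Y0)
    (hY1 : IsXf D (E 1) Y1) (hY2 : IsXf D (E (-2)) Y2) :
    ⁅Y0, Y1⁆ = Y1 ∧ ⁅Y0, Y2⁆ = (-2 : ℂ) • Y2 ∧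
    ⁅Y1, ⁅Y1, ⁅Y1, ⁅Y1, ⁅Y1, Y2⁆⁆⁆⁆⁆ = 0 ∧ ⁅Y2, ⁅Y2, Y1⁆⁆ = 0 := by
  have hw1 := lie_X0_Xf hD hY0 hY1
  have hw2 := lie_X0_Xf hD hY0 hY2
  have hd1 := lie_D_Xf hD hY0 hY1
  have hd2 := lie_D_Xf hD hY0 hY2
  have k1 := lie_apply_E_eq_zero hY1.1 hY2.1
  have k2 := lie_apply_E_eq_zero hY1.1 k1
  have k3 := lie_apply_E_eq_zero hY1.1 k2
  have k4 := lie_apply_E_eq_zero hY1.1 k3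
  have k5 := lie_apply_E_eq_zero hY1.1 k4
  have l2 := lie_apply_E_eq_zero hY2.1 (lie_apply_E_eq_zero hY2.1 hY1.1)
  refine ⟨by rw [hw1, one_smul], ?_, ?_, ?_⟩
  · rw [hw2, ← Int.cast_smul_eq_zsmul ℂ, Int.cast_neg, Int.cast_ofNat]
  · exact eq_zero_of_lie_D_eq_zero hD k5
      (lie_D_serre₁ hw1 hw2 hd1 hd2 (hY1.1 _) (hY1.1 _) (hY2.1 _))
  · exact eq_zero_of_lie_D_eq_zero hD l2
      (lie_D_serre₂ hw1 hw2 hd1 hd2 (hY1.1 _) (hY2.1 _) (hY2.1 _))
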